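/- For every n, d ∈ ℕ, every J ⊆ [d] with n ≤ |J|, and every ξ ∈ 𝕋^d, one has β_n^J(ξ) = Σ_{U ⊆ J} (Π_{i ∈ J∖U} cos²(π ξ_i))·(Π_{i ∈ U} sin²(π ξ_i))·kr_n^{(|J|)}(|U|), where kr is the Krawtchouk polynomial. -/

import Mathlib

open Classical in
noncomputable def Dnj (d n : ℕ) (J : Finset (Fin d)) : Finset (Fin d → ℤ) :=
  (Finset.Icc (fun _ => (-1 : ℤ)) (fun _ => (1 : ℤ))).filter
    (fun y => (Finset.univ.filter (fun i => |y i| = 1)).card = n ∧ ∀ i, y i ≠ 0 → i ∈ J)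

noncomputable def betaMult (d n : ℕ) (J : Finset (Fin d)) (ξ : Fin d → ℝ) : ℂ :=
  ((Dnj d n J).card : ℂ)⁻¹ *
    ∑ y ∈ Dnj d n J, Complex.exp (2 * (Real.pi : ℂ) * Complex.I *
      ((∑ k, (y k : ℝ) * ξ k : ℝ) : ℂ))

/-- Generalized binomial coefficient `C(x, j) = x(x-1)⋯(x-j+1)/j!`. -/
noncomputable def genBinom (x : ℝ) (j : ℕ) : ℝ :=
  (∏ i ∈ Finset.range j, (x - i)) / (j.factorial : ℝ)

/-- The `k`-th Krawtchouk polynomial `kr_k^{(m)}(x)`. -/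
noncomputable def kraw (m k : ℕ) (x : ℝ) : ℝ :=
  ((m.choose k : ℝ))⁻¹ *
    ∑ j ∈ Finset.range (k + 1), (-1 : ℝ) ^ j * genBinom x j * genBinom ((m : ℝ) - x) (k - j)

/-!
Grouping `y ∈ D_n^J` by its support `S` and summing over the signs on `S` turns the exponential sum
into `2 ^ n` times the elementary symmetric polynomial of degree `n` in the numbers `cos (2πξ i)`,
`i ∈ J`, that is, `2 ^ n` times the coefficient of `X ^ n` in `∏ i ∈ J, (1 + cos (2πξ i) X)`. Since
`1 + cos (2t) X = cos² t (1 + X) + sin² t (1 - X)`, expanding this product over the set `U` of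
indices contributing the `sin²` term leaves the `n`-th coefficients of
`(1 + X) ^ (|J| - |U|) (1 - X) ^ |U|`, which are the Krawtchouk values up to the factor `C(|J|, n)`.
-/

open Finset Polynomial

section SignVectors

variable {ι : Type*} [Fintype ι] [DecidableEq ι]

/-- The vectors with entries `±1` on `S` and `0` off `S`; `D_n^J` is their disjoint union over the
`n`-element subsets `S` of `J`. -/
def signVectors (S : Finset ι) : Finset (ι → ℤ) :=
  Fintype.piFinset fun i => if i ∈ S then {1, -1} else {0}

theorem mem_signVectors {S : Finset ι} {y : ι → ℤ} :
    y ∈ signVectors S ↔ (∀ i, |y i| ≤ 1) ∧ ({i | y i ≠ 0} : Finset ι) = S := by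
  have entry (i : ι) : y i ∈ (if i ∈ S then {1, -1} else {0} : Finset ℤ) ↔
      |y i| ≤ 1 ∧ (y i ≠ 0 ↔ i ∈ S) := by
    split_ifs with hi <;> simp only [mem_insert, mem_singleton, hi] <;> grind
  simp [signVectors, entry, forall_and, Finset.ext_iff]

theorem pairwiseDisjoint_signVectors (s : Set (Finset ι)) : s.PairwiseDisjoint signVectors :=
  fun _ _ _ _ hne => disjoint_left.2 fun _ hS hT =>
    hne ((mem_signVectors.1 hS).2.symm.trans (mem_signVectors.1 hT).2)

theorem sum_signVectors_prod_zpow {K : Type*} [Field K] (S : Finset ι) (z : ι → K) :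
    ∑ y ∈ signVectors S, ∏ i, z i ^ y i = ∏ i ∈ S, (z i + (z i)⁻¹) := by
  have factor (i : ι) : ∑ e ∈ (if i ∈ S then {1, -1} else {0} : Finset ℤ), z i ^ e =
      if i ∈ S then z i + (z i)⁻¹ else 1 := by
    split_ifs <;> simp
  rw [signVectors, ← prod_univ_sum]
  simp only [factor, prod_ite_mem, univ_inter]

end SignVectors

section PolynomialCoefficients

variable {ι R : Type*}

theorem coeff_one_sub_X_pow [CommRing R] (u j : ℕ) :
    ((1 - X : R[X]) ^ u).coeff j = (-1) ^ j * u.choose j := by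
  have comp_neg_X : (1 - X : R[X]) ^ u = ((1 + X) ^ u).comp (C (-1) * X) := by
    simp [sub_eq_add_neg]
  rw [comp_neg_X, comp_C_mul_X_coeff, coeff_one_add_X_pow, mul_comm]

theorem coeff_prod_one_add_C_mul_X [CommSemiring R] (J : Finset ι) (c : ι → R) (n : ℕ) :
    (∏ i ∈ J, (1 + C (c i) * X)).coeff n = ∑ S ∈ J.powersetCard n, ∏ i ∈ S, c i := by
  simp only [prod_one_add, prod_mul_distrib, prod_const, ← map_prod, finsetSum_coeff,
    coeff_C_mul_X_pow, ← sum_filter, powersetCard_eq_filter, eq_comm]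

theorem sum_powersetCard_prod_sub [DecidableEq ι] [CommRing R]
    (J : Finset ι) (n : ℕ) {a b : ι → R} (hab : ∀ i ∈ J, a i + b i = 1) :
    ∑ S ∈ J.powersetCard n, ∏ i ∈ S, (a i - b i) =
      ∑ U ∈ J.powerset, (∏ i ∈ J \ U, a i) * (∏ i ∈ U, b i) *
        ((1 + X : R[X]) ^ (J.card - U.card) * (1 - X) ^ U.card).coeff n := by
  have factor : ∀ i ∈ J,
      (1 + C (a i - b i) * X : R[X]) = C (b i) * (1 - X) + C (a i) * (1 + X) := by
    intro i hi
    have C_add_C : (C (a i) + C (b i) : R[X]) = 1 := by rw [← C_add, hab i hi, C_1]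
    rw [C_sub]
    linear_combination -C_add_C
  rw [← coeff_prod_one_add_C_mul_X, prod_congr rfl factor, prod_add, finsetSum_coeff]
  refine sum_congr rfl fun U hU => ?_
  rw [← card_sdiff_of_subset (mem_powerset.1 hU), ← coeff_C_mul]
  simp only [prod_mul_distrib, prod_const, C_mul, map_prod]
  congr 1
  ring

end PolynomialCoefficients

section Krawtchouk

theorem genBinom_natCast (u j : ℕ) : genBinom u j = u.choose j := by
  rw [genBinom, Nat.cast_choose_eq_descPochhammer_div, descPochhammer_eval_eq_prod_range]

theorem kraw_natCast_eq_coeff {m u : ℕ} (k : ℕ) (hu : u ≤ m) :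
    kraw m k u = (m.choose k : ℝ)⁻¹ * ((1 + X : ℝ[X]) ^ (m - u) * (1 - X) ^ u).coeff k := by
  rw [kraw, mul_comm (_ ^ (m - u)), coeff_mul, Nat.sum_antidiagonal_eq_sum_range_succ_mk]
  simp only [← Nat.cast_sub hu, genBinom_natCast, coeff_one_sub_X_pow, coeff_one_add_X_pow]

theorem inv_choose_mul_sum_powersetCard_prod_sub {ι : Type*} [DecidableEq ι]
    (J : Finset ι) (n : ℕ) {a b : ι → ℝ} (hab : ∀ i ∈ J, a i + b i = 1) :
    (J.card.choose n : ℝ)⁻¹ * ∑ S ∈ J.powersetCard n, ∏ i ∈ S, (a i - b i) =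
      ∑ U ∈ J.powerset, (∏ i ∈ J \ U, a i) * (∏ i ∈ U, b i) * kraw J.card n U.card := by
  rw [sum_powersetCard_prod_sub J n hab, mul_sum]
  refine sum_congr rfl fun U hU => ?_
  rw [kraw_natCast_eq_coeff n (card_le_card (mem_powerset.1 hU)), mul_left_comm]

end Krawtchouk

section ExponentialSum

variable (d n : ℕ) (J : Finset (Fin d))

theorem Dnj_eq_biUnion_signVectors : Dnj d n J = (J.powersetCard n).biUnion signVectors := by
  ext y
  have card_abs_eq_one (h : ∀ i, |y i| ≤ 1) : #{i | |y i| = 1} = #{i | y i ≠ 0} :=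
    congrArg card (filter_congr fun i _ => by grind)
  have mem_box_iff : y ∈ Icc (fun _ => -1) (fun _ => 1) ↔ ∀ i, |y i| ≤ 1 := by
    simp [Pi.le_def, abs_le, forall_and]
  have support_subset_iff : ({i | y i ≠ 0} : Finset (Fin d)) ⊆ J ↔ ∀ i, y i ≠ 0 → i ∈ J := by
    simp [subset_iff]
  simp only [Dnj, mem_filter, mem_box_iff, mem_biUnion, mem_powersetCard, mem_signVectors,
    ← support_subset_iff]
  constructor
  · rintro ⟨box, card_eq, subset⟩
    exact ⟨_, ⟨subset, card_abs_eq_one box ▸ card_eq⟩, box, rfl⟩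
  · rintro ⟨_, ⟨subset, card_eq⟩, box, rfl⟩
    exact ⟨box, (card_abs_eq_one box).trans card_eq, subset⟩

theorem sum_Dnj_prod_zpow {K : Type*} [Field K] (z : Fin d → K) :
    ∑ y ∈ Dnj d n J, ∏ i, z i ^ y i = ∑ S ∈ J.powersetCard n, ∏ i ∈ S, (z i + (z i)⁻¹) := by
  rw [Dnj_eq_biUnion_signVectors, sum_biUnion (pairwiseDisjoint_signVectors _)]
  simp only [sum_signVectors_prod_zpow]

theorem card_Dnj : (Dnj d n J).card = 2 ^ n * J.card.choose n := by
  have card_eq_sum : ((Dnj d n J).card : ℚ) = ∑ S ∈ J.powersetCard n, 2 ^ S.card := by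
    simpa [one_add_one_eq_two] using sum_Dnj_prod_zpow d n J (fun _ => (1 : ℚ))
  rw [sum_powersetCard, nsmul_eq_mul, mul_comm] at card_eq_sum
  exact_mod_cast card_eq_sum

theorem betaMult_eq_sum_prod_cos (ξ : Fin d → ℝ) :
    betaMult d n J ξ = (((J.card.choose n : ℝ)⁻¹ *
      ∑ S ∈ J.powersetCard n, ∏ i ∈ S, Real.cos (2 * Real.pi * ξ i) : ℝ) : ℂ) := by
  let z (i : Fin d) : ℂ := Complex.exp (2 * Real.pi * ξ i * Complex.I)
  have exp_eq_prod_zpow (y : Fin d → ℤ) :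
      Complex.exp (2 * Real.pi * Complex.I * ((∑ k, (y k : ℝ) * ξ k : ℝ) : ℂ)) =
        ∏ i, z i ^ y i := by
    simp only [z, ← Complex.exp_int_mul, ← Complex.exp_sum]
    push_cast
    rw [mul_sum]
    congr! 2
    ring
  have add_inv_eq_two_cos (i : Fin d) : z i + (z i)⁻¹ = 2 * Complex.cos (2 * Real.pi * ξ i) := by
    simp only [z, ← Complex.exp_neg, Complex.two_cos, neg_mul]
  have prod_two_cos : ∀ S ∈ J.powersetCard n,
      ∏ i ∈ S, (z i + (z i)⁻¹) = 2 ^ n * ∏ i ∈ S, Complex.cos (2 * Real.pi * ξ i) := by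
    intro S hS
    simp only [add_inv_eq_two_cos, prod_mul_distrib, prod_const, (mem_powersetCard.1 hS).2]
  simp only [betaMult, exp_eq_prod_zpow, sum_Dnj_prod_zpow, card_Dnj]
  rw [sum_congr rfl prod_two_cos, ← mul_sum]
  push_cast
  field_simp

end ExponentialSum

theorem stmt13 (d n : ℕ) (hd : 0 < d) (hn : 0 < n) (J : Finset (Fin d))
    (hJ : n ≤ J.card) (ξ : Fin d → ℝ) :
    betaMult d n J ξ =
      ∑ U ∈ J.powerset,
        (((∏ i ∈ J \ U, Real.cos (Real.pi * ξ i) ^ 2) *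
          (∏ i ∈ U, Real.sin (Real.pi * ξ i) ^ 2) *
          kraw J.card n (U.card : ℝ) : ℝ) : ℂ) := by
  have cos_eq_sub (i : Fin d) : Real.cos (2 * Real.pi * ξ i) =
      Real.cos (Real.pi * ξ i) ^ 2 - Real.sin (Real.pi * ξ i) ^ 2 := by
    rw [mul_assoc, Real.cos_two_mul']
  rw [betaMult_eq_sum_prod_cos, ← Complex.ofReal_sum]
  simp only [cos_eq_sub]
  rw [inv_choose_mul_sum_powersetCard_prod_sub J n fun i _ => Real.cos_sq_add_sin_sq _]
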